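/- For every finite simple graph G on n vertices with m edges, vsrc(G) ≤ min{⌊n²/4⌋, m}. -/

import Mathlib

open SimpleGraph

/-- A very strong rainbow coloring: for every shortest path (a path whose length equals the
distance between its endpoints), all edges receive pairwise distinct colors. -/
def IsVSRC {V : Type*} (G : SimpleGraph V) (c : Sym2 V → ℕ) : Prop :=
  ∀ (u v : V) (p : G.Walk u v), p.IsPath → p.length = G.dist u v →
    (p.edges.map c).Nodup

/-- The part of a walk following one of its darts is a strictly shorter walk. -/
lemma exists_walk_from_dart_snd {V : Type*} {G : SimpleGraph V} {u v : V} (p : G.Walk u v)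
    {d : G.Dart} (hd : d ∈ p.darts) : ∃ q : G.Walk d.snd v, q.length < p.length := by
  induction p with
  | nil => simp at hd
  | cons h p ih =>
    rw [Walk.darts_cons, List.mem_cons] at hd
    rcases hd with rfl | hd
    · exact ⟨p, by simp⟩
    · obtain ⟨q, hq⟩ := ih hd
      exact ⟨q, by rw [Walk.length_cons]; omega⟩

/-- A coloring in which the endpoints of any two edges of the same color are equal or adjacent
is a very strong rainbow coloring. -/
lemma isVSRC_of_eq_or_adj {V : Type*} {G : SimpleGraph V} {c : Sym2 V → ℕ}
    (hc : ∀ a b x y, G.Adj a b → G.Adj x y → c s(a, b) = c s(x, y) → a = y ∨ G.Adj a y) :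
    IsVSRC G c := by
  intro u v p _ hp
  induction p with
  | nil => simp
  | @cons u w v h p ih =>
    rw [Walk.length_cons] at hp
    rw [Walk.edges_cons, List.map_cons, List.nodup_cons]
    constructor
    · intro hmem
      obtain ⟨e, he, hce⟩ := List.mem_map.1 hmem
      obtain ⟨d, hd, rfl⟩ := List.mem_map.1 he
      obtain ⟨q, hq⟩ := exists_walk_from_dart_snd p hd
      rcases hc u w d.fst d.snd h d.adj hce.symm with heq | hadj
      · have := dist_le (q.copy heq.symm rfl)
        rw [Walk.length_copy] at this
        omega
      · have := dist_le (Walk.cons hadj q)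
        rw [Walk.length_cons] at this
        omega
    · have hle : p.length ≤ G.dist w v := by
        obtain ⟨q, hq⟩ := p.reachable.exists_walk_length_eq_dist
        have := dist_le (Walk.cons h q)
        rw [Walk.length_cons] at this
        omega
      have heq := le_antisymm hle (dist_le p)
      exact ih (p.isPath_of_length_eq_dist heq) heq

/-- The edges inside a set of `n` vertices can be colored with `⌊n² / 4⌋` colors so that each
color class lies in a clique. -/
lemma exists_clique_coloring {V : Type*} [DecidableEq V] (G : SimpleGraph V) (s : Finset V) :
    ∃ f : V → V → ℕ, (∀ a b, f a b = f b a) ∧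
      (∀ a ∈ s, ∀ b ∈ s, G.Adj a b → f a b < s.card ^ 2 / 4) ∧
      ∀ a ∈ s, ∀ b ∈ s, ∀ x ∈ s, ∀ y ∈ s, G.Adj a b → G.Adj x y → f a b = f x y →
        a = y ∨ G.Adj a y := by
  induction s using Finset.strongInduction with
  | H s ih =>
  by_cases hs : ∃ u ∈ s, ∃ v ∈ s, G.Adj u v
  · obtain ⟨u, hu, v, hv, huv⟩ := hs
    set t := (s.erase u).erase v with ht
    have hvs : v ∈ s.erase u := Finset.mem_erase.2 ⟨huv.ne', hv⟩
    have hcard : s.card = t.card + 2 := by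
      rw [← Finset.card_erase_add_one hu, ← Finset.card_erase_add_one hvs]
    have hts : t ⊂ s := (Finset.erase_ssubset hvs).trans (Finset.erase_ssubset hu)
    obtain ⟨f, hsymm, hlt, hf⟩ := ih t hts
    have hsq : s.card ^ 2 / 4 = t.card ^ 2 / 4 + t.card + 1 := by
      rw [hcard, show (t.card + 2) ^ 2 = t.card ^ 2 + 4 * (t.card + 1) by ring]
      omega
    obtain ⟨idx, hidx, hinj⟩ : ∃ idx : V → ℕ, (∀ a ∈ t, idx a < t.card) ∧
        ∀ a ∈ t, ∀ b ∈ t, idx a = idx b → a = b := by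
      refine ⟨fun a => if h : a ∈ t then t.equivFin ⟨a, h⟩ else 0, ?_, ?_⟩
      · intro a ha
        simp [ha]
      · intro a ha b hb hab
        simpa [ha, hb, Fin.val_inj] using hab
    have hmem : ∀ a ∈ s, a ∉ t → a = u ∨ a = v := by
      intro a ha hat
      simp only [ht, Finset.mem_erase] at hat
      tauto
    have huv' := huv.symm
    rw [hsq]
    generalize t.card ^ 2 / 4 = k at *
    clear_value t
    refine ⟨fun a b => if a ∈ t then (if b ∈ t then f a b else k + idx a)
      else if b ∈ t then k + idx b else k + t.card, ?_, ?_, ?_⟩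
    · intro a b
      grind
    · intro a ha b hb hab
      grind
    · intro a ha b hb x hx y hy hab hxy h
      have hout : a ∉ t → y ∉ t → a = y ∨ G.Adj a y := by
        intro hat hyt
        rcases hmem a ha hat with rfl | rfl <;> rcases hmem y hy hyt with rfl | rfl <;>
          simp [huv, huv']
      by_cases hat : a ∈ t <;> by_cases hbt : b ∈ t <;> by_cases hxt : x ∈ t <;>
        by_cases hyt : y ∈ t <;>
        simp only [hat, hbt, hxt, hyt, if_true, if_false, Nat.add_left_cancel_iff] at h <;>
        first
        | exact hout hat hyt
        | exact hf a hat b hbt x hxt y hyt hab hxy h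
        | exact Or.inl (hinj a hat y hyt h)
        | exact Or.inr (hinj a hat x hxt h ▸ hxy)
        | exact Or.inr (hinj b hbt y hyt h ▸ hab)
        | exact absurd (hlt _ hat _ hbt hab) (by omega)
        | exact absurd (hlt _ hxt _ hyt hxy) (by omega)
        | exact absurd (hidx a hat) (by omega)
        | exact absurd (hidx y hyt) (by omega)
  · push Not at hs
    exact ⟨fun _ _ => 0, fun _ _ => rfl, fun a ha b hb h => absurd h (hs a ha b hb),
      fun a ha b hb _ _ _ _ h => absurd h (hs a ha b hb)⟩

theorem stmt_3 {V : Type*} [Fintype V] [DecidableEq V] (G : SimpleGraph V)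
    [DecidableRel G.Adj] :
    ∃ c : Sym2 V → ℕ, IsVSRC G c ∧
      ∀ e ∈ G.edgeSet, c e < min (Fintype.card V ^ 2 / 4) G.edgeFinset.card := by
  obtain ⟨f, hsymm, hlt, hf⟩ := exists_clique_coloring G Finset.univ
  let g : Sym2 V → ℕ := Sym2.lift ⟨f, hsymm⟩
  let I := G.edgeFinset.image g
  have hI : ∀ e ∈ G.edgeSet, g e ∈ I := fun e he =>
    Finset.mem_image_of_mem g (mem_edgeFinset.2 he)
  have hIcard : I.card ≤ min (Fintype.card V ^ 2 / 4) G.edgeFinset.card := by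
    refine le_min ?_ Finset.card_image_le
    rw [← Finset.card_range (Fintype.card V ^ 2 / 4)]
    refine Finset.card_le_card (Finset.image_subset_iff.2 fun e he => ?_)
    induction e with
    | _ a b =>
      exact Finset.mem_range.2
        (hlt a (Finset.mem_univ a) b (Finset.mem_univ b) (mem_edgeFinset.1 he))
  refine ⟨fun e => if h : g e ∈ I then I.equivFin ⟨g e, h⟩ else 0, ?_, ?_⟩
  · refine isVSRC_of_eq_or_adj fun a b x y hab hxy h => ?_
    simp only [hI s(a, b) hab, hI s(x, y) hxy, dite_true, Fin.val_inj,
      EmbeddingLike.apply_eq_iff_eq, Subtype.mk.injEq] at h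
    exact hf a (Finset.mem_univ a) b (Finset.mem_univ b) x (Finset.mem_univ x) y
      (Finset.mem_univ y) hab hxy h
  · intro e he
    simp only [hI e he, dite_true]
    exact (Fin.is_lt _).trans_le hIcard
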